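/- The number of Dyck paths of length 2n with exactly k long non-final sequences equals the Narayana number N(n,k) = (1/n)*C(n,k)*C(n,k+1), i.e., the statistic lnfs is equidistributed with the number of descents. -/

import Mathlib

/-!
The proof counts ballot words ending anywhere in the quarter plane, not only Dyck paths.
Let `Φ p q` be the sum of `X ^ lnfs` over the ballot words with `p` letters `v` and `q` letters `h`.
Appending a letter to a word raises `lnfs` exactly when the word ends in the other letter doubled, so
for `q ≤ p`
`Φ (p+1) (q+1) = Φ p (q+1) + Φ (p+1) q + (X - 1) * (Ω h p (q+1) + Ω v (p+1) q)`,
where `Ω b` only counts the words ending in `bb`. Repeating the last letter of a word to `(p, q)`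
does not change `lnfs`. If `q < p`, this yields each word counted by the two `Ω` terms once, so their
sum is `Φ p q` (`Phi_succ_succ`). If `p = q`, all terms except `Φ (p+1) p` vanish (`Phi_diag`).

With `Φ p 0 = 1`, this recursion determines all `Φ p q` with `q ≤ p`, and Pascal's rule shows that
the coefficients are `C(p,k) C(q,k) - C(p-1,k-1) C(q+1,k+1)` (`coeff_Phi`). At `p = q = n` this is
the Narayana number.

Words are stored as lists with the last letter at the head, so that appending a letter is `cons`.
-/

open Finset

/-- The `i`-th letter (1-indexed) of a word `w`; `true` = vertical step `v`,
`false` = horizontal step `h`; junk value `false` out of range. -/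
def ltr {m : ℕ} (w : Fin m → Bool) (i : ℕ) : Bool :=
  if h : 1 ≤ i ∧ i ≤ m then w ⟨i - 1, by omega⟩ else false

/-- The number of occurrences of the letter `b` among the first `i` letters of `w`. -/
def pcnt {m : ℕ} (w : Fin m → Bool) (b : Bool) (i : ℕ) : ℕ :=
  ((Finset.Icc 1 i).filter fun j => ltr w j = b).card

/-- `w` is a Dyck path of length `2n`: `n` vertical steps and every prefix has at
least as many `v`'s as `h`'s. -/
def IsDyck (n : ℕ) (w : Fin (2 * n) → Bool) : Prop :=
  pcnt w true (2 * n) = n ∧ ∀ i ≤ 2 * n, pcnt w false i ≤ pcnt w true i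

/-- The descent (valley) set of `w`: positions `i` with `w_i = h`, `w_{i+1} = v`. -/
def Des {n : ℕ} (w : Fin (2 * n) → Bool) : Finset ℕ :=
  (Finset.Icc 1 (2 * n - 1)).filter fun i => ltr w i = false ∧ ltr w (i + 1) = true

/-- The set of long non-final sequences of `w`: positions `2 ≤ i ≤ 2n-1` with
`w_{i-1} w_i w_{i+1} = vvh` or `hhv`. -/
def LSset {n : ℕ} (w : Fin (2 * n) → Bool) : Finset ℕ :=
  (Finset.Icc 2 (2 * n - 1)).filter fun i =>
    ltr w (i - 1) = ltr w i ∧ ltr w i ≠ ltr w (i + 1)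

open Polynomial

/-! ### Ballot words -/

/-- Every prefix of the word has at least as many `v`'s as `h`'s. The last letter is the head of
the list, so prefixes of the word are suffixes of the list. -/
def Bal : List Bool → Prop
  | [] => True
  | x :: l => (x :: l).count false ≤ (x :: l).count true ∧ Bal l

/-- The word ends in the letter `b` doubled. -/
def dbl (b : Bool) : List Bool → Bool
  | x :: y :: _ => x == b && y == b
  | _ => false

/-- The number of long non-final sequences of a word stored with its last letter first. -/
def lnfs : List Bool → ℕ
  | [] => 0
  | x :: l => lnfs l + if dbl (!x) l then 1 else 0

open Classical in
/-- The ballot words with `p` letters `v` and `q` letters `h`. -/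
noncomputable def ballotWords (p q : ℕ) : Finset (List Bool) :=
  (List.finite_length_eq Bool (p + q)).toFinset.filter
    fun l => Bal l ∧ l.count true = p ∧ l.count false = q

lemma mem_ballotWords {p q : ℕ} {l : List Bool} :
    l ∈ ballotWords p q ↔ Bal l ∧ l.count true = p ∧ l.count false = q := by
  have := List.count_true_add_count_false l
  simp only [ballotWords, Finset.mem_filter, Set.Finite.mem_toFinset, Set.mem_ofPred_eq,
    and_iff_right_iff_imp]
  omega

lemma Bal.le {l : List Bool} (h : Bal l) : l.count false ≤ l.count true := by
  cases l with
  | nil => simp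
  | cons x l => exact h.1

lemma ballotWords_eq_empty {p q : ℕ} (h : p < q) : ballotWords p q = ∅ := by
  ext l
  simp only [mem_ballotWords, Finset.notMem_empty, iff_false]
  rintro ⟨hl, h1, h2⟩
  have := hl.le
  omega

lemma ballotWords_zero_zero : ballotWords 0 0 = {[]} := by
  ext l
  rw [mem_ballotWords, Finset.mem_singleton]
  constructor
  · rintro ⟨_, h1, h2⟩
    have := List.count_true_add_count_false l
    exact List.length_eq_zero_iff.1 (by omega)
  · rintro rfl
    simp [Bal]

lemma sum_ballotWords_succ_zero {M : Type*} [AddCommMonoid M] (f : List Bool → M) (p : ℕ) :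
    ∑ l ∈ ballotWords (p + 1) 0, f l = ∑ l ∈ ballotWords p 0, f (true :: l) := by
  have : ballotWords (p + 1) 0 = (ballotWords p 0).image (List.cons true) := by
    ext l
    simp only [mem_ballotWords, Finset.mem_image]
    constructor
    · rintro ⟨h, h1, h2⟩
      rcases l with _ | ⟨_ | _, l⟩
      · simp at h1
      · simp at h2
      · exact ⟨l, ⟨h.2, by simpa using h1, by simpa using h2⟩, rfl⟩
    · rintro ⟨l, ⟨h, h1, h2⟩, rfl⟩
      refine ⟨⟨?_, h⟩, ?_, ?_⟩ <;> simp [h1, h2]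
  rw [this, Finset.sum_image (by simp)]

/-- Sorting words by their last letter. -/
lemma sum_ballotWords_succ_succ {M : Type*} [AddCommMonoid M] (f : List Bool → M) {p q : ℕ}
    (hqp : q ≤ p) :
    ∑ l ∈ ballotWords (p + 1) (q + 1), f l =
      ∑ l ∈ ballotWords p (q + 1), f (true :: l) +
        ∑ l ∈ ballotWords (p + 1) q, f (false :: l) := by
  have : ballotWords (p + 1) (q + 1) =
      (ballotWords p (q + 1)).image (List.cons true) ∪
        (ballotWords (p + 1) q).image (List.cons false) := by
    ext l
    simp only [mem_ballotWords, Finset.mem_image, Finset.mem_union]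
    constructor
    · rintro ⟨h, h1, h2⟩
      rcases l with _ | ⟨_ | _, l⟩
      · simp at h1
      · exact Or.inr ⟨l, ⟨h.2, by simpa using h1, by simpa using h2⟩, rfl⟩
      · exact Or.inl ⟨l, ⟨h.2, by simpa using h1, by simpa using h2⟩, rfl⟩
    · rintro (⟨l, ⟨h, h1, h2⟩, rfl⟩ | ⟨l, ⟨h, h1, h2⟩, rfl⟩) <;>
      · refine ⟨⟨?_, h⟩, ?_, ?_⟩ <;> simp [h1, h2, hqp]
  rw [this, Finset.sum_union, Finset.sum_image (by simp), Finset.sum_image (by simp)]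
  rw [Finset.disjoint_left]
  simp only [Finset.mem_image]
  rintro _ ⟨l, _, rfl⟩ ⟨l', _, h⟩
  simp at h

/-! ### The recursion for the generating polynomials -/

/-- The generating polynomial of `lnfs` over ballot words with `p` letters `v` and `q` letters
`h`. -/
noncomputable def Phi (p q : ℕ) : ℤ[X] := ∑ l ∈ ballotWords p q, X ^ lnfs l

/-- The part of `Phi p q` coming from words ending in `b`. -/
noncomputable def Psi (b : Bool) (p q : ℕ) : ℤ[X] :=
  ∑ l ∈ ballotWords p q, if l.head? = some b then X ^ lnfs l else 0

/-- The part of `Phi p q` coming from words ending in `bb`. -/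
noncomputable def Omega (b : Bool) (p q : ℕ) : ℤ[X] :=
  ∑ l ∈ ballotWords p q, if dbl b l then X ^ lnfs l else 0

lemma X_pow_lnfs_cons (b : Bool) (l : List Bool) :
    (X : ℤ[X]) ^ lnfs (b :: l) =
      X ^ lnfs l + (X - 1) * if dbl (!b) l then X ^ lnfs l else 0 := by
  rw [lnfs]
  split_ifs <;> ring

lemma dbl_cons (b x : Bool) (l : List Bool) :
    dbl b (x :: l) = true ↔ x = b ∧ l.head? = some b := by
  cases l <;> simp [dbl]

lemma lnfs_cons_of_head {b : Bool} {l : List Bool} (h : l.head? = some b) :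
    lnfs (b :: l) = lnfs l := by
  rw [lnfs]
  rcases l with _ | ⟨x, l⟩
  · simp at h
  · obtain rfl : x = b := by simpa using h
    simp [dbl_cons]

lemma Phi_succ_succ_aux {p q : ℕ} (hqp : q ≤ p) :
    Phi (p + 1) (q + 1) = Phi p (q + 1) + Phi (p + 1) q +
      (X - 1) * (Omega false p (q + 1) + Omega true (p + 1) q) := by
  simp only [Phi, Omega]
  rw [sum_ballotWords_succ_succ _ hqp]
  simp only [X_pow_lnfs_cons, Finset.sum_add_distrib, ← Finset.mul_sum, Bool.not_true,
    Bool.not_false]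
  ring

lemma ite_dbl_cons_self (b : Bool) (l : List Bool) :
    (if dbl b (b :: l) then (X : ℤ[X]) ^ lnfs (b :: l) else 0) =
      if l.head? = some b then X ^ lnfs l else 0 := by
  simp only [dbl_cons, true_and]
  split_ifs with h
  · rw [lnfs_cons_of_head h]
  · rfl

lemma Omega_false {p q : ℕ} (hqp : q < p) : Omega false p (q + 1) = Psi false p q := by
  obtain ⟨p, rfl⟩ : ∃ p', p = p' + 1 := ⟨p - 1, by omega⟩
  rw [Omega, sum_ballotWords_succ_succ _ (by omega), Psi]
  simp only [ite_dbl_cons_self]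
  simp [dbl_cons]

lemma Omega_true {p q : ℕ} (hqp : q ≤ p) : Omega true (p + 1) q = Psi true p q := by
  rw [Omega, Psi]
  cases q with
  | zero => rw [sum_ballotWords_succ_zero]; simp only [ite_dbl_cons_self]
  | succ q =>
    rw [sum_ballotWords_succ_succ _ (by omega)]
    simp only [ite_dbl_cons_self]
    simp [dbl_cons]

lemma Psi_add_Psi {p q : ℕ} (hp : 0 < p) : Psi false p q + Psi true p q = Phi p q := by
  rw [Psi, Psi, Phi, ← Finset.sum_add_distrib]
  refine Finset.sum_congr rfl fun l hl => ?_
  rw [mem_ballotWords] at hl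
  rcases l with _ | ⟨_ | _, l⟩
  · have := hl.2.1
    simp at this
    omega
  · simp
  · simp

/-- A ballot word returning to height `0` cannot end in `v`. -/
lemma Psi_true_diag (p : ℕ) : Psi true p p = 0 := by
  refine Finset.sum_eq_zero fun l hl => ?_
  rw [mem_ballotWords] at hl
  rcases l with _ | ⟨_ | _, l⟩
  · simp
  · simp
  · obtain ⟨h, h1, h2⟩ := hl
    have := h.2.le
    simp at h1 h2
    omega

lemma Phi_succ_succ {p q : ℕ} (hqp : q < p) :
    Phi (p + 1) (q + 1) = Phi p (q + 1) + Phi (p + 1) q + (X - 1) * Phi p q := by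
  rw [Phi_succ_succ_aux hqp.le, Omega_false hqp, Omega_true hqp.le, Psi_add_Psi (by omega)]

lemma Phi_diag (p : ℕ) : Phi (p + 1) (p + 1) = Phi (p + 1) p := by
  rw [Phi_succ_succ_aux le_rfl, Omega_true le_rfl, Psi_true_diag, Phi, Omega,
    ballotWords_eq_empty (Nat.lt_succ_self p)]
  simp

/-- Without `h`'s, no doubled letter is ever followed by a different one. -/
lemma Phi_zero (p : ℕ) : Phi p 0 = 1 := by
  induction p with
  | zero => simp [Phi, ballotWords_zero_zero, lnfs]
  | succ p ih =>
    have h : Omega false p 0 = 0 := by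
      refine Finset.sum_eq_zero fun l hl => ?_
      rw [mem_ballotWords] at hl
      rcases l with _ | ⟨_ | _, l⟩
      · simp [dbl]
      · simp at hl
      · simp [dbl_cons]
    rw [Phi, sum_ballotWords_succ_zero]
    simp only [X_pow_lnfs_cons, Finset.sum_add_distrib, ← Finset.mul_sum, Bool.not_true]
    rw [← Phi, ← Omega, h, ih]
    simp

/-! ### The coefficients -/

/-- The number of ballot words with `p + 1` letters `v`, `q ≤ p + 1` letters `h` and
`lnfs = k`, as a difference of two products. The coefficient
`C(p,k-1)` is to vanish at `k = 0`, hence the case distinction. -/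
def ballotCount (p q : ℕ) : ℕ → ℤ
  | 0 => 1
  | k + 1 => (p + 1).choose (k + 1) * q.choose (k + 1) - p.choose k * (q + 1).choose (k + 2)

lemma coeff_Phi (p q k : ℕ) (hqp : q ≤ p + 1) : (Phi (p + 1) q).coeff k = ballotCount p q k := by
  induction hm : p + q using Nat.strong_induction_on generalizing p q k with
  | _ m ih =>
  subst hm
  cases q with
  | zero =>
    rw [Phi_zero]
    cases k with
    | zero => simp [ballotCount, coeff_one]
    | succ k =>
      rw [ballotCount, Nat.choose_eq_zero_of_lt (show 0 + 1 < k + 2 by omega)]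
      simp [coeff_one]
  | succ q =>
    rcases (show q = p ∨ q < p by omega) with rfl | hlt
    · rw [Phi_diag, ih _ (by omega) q q k (by omega) rfl]
      cases k with
      | zero => rfl
      | succ k =>
        simp only [ballotCount, Nat.choose_succ_succ, Nat.cast_add]
        ring
    · obtain ⟨p, rfl⟩ : ∃ p', p = p' + 1 := ⟨p - 1, by omega⟩
      rw [Phi_succ_succ (by omega), sub_mul, one_mul, coeff_add, coeff_add, coeff_sub,
        ih _ (by omega) p (q + 1) k (by omega) rfl, ih _ (by omega) (p + 1) q k (by omega) rfl,
        ih _ (by omega) p q k (by omega) rfl]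
      cases k with
      | zero => simp [ballotCount]
      | succ k =>
        rw [coeff_X_mul, ih _ (by omega) p q k (by omega) rfl]
        cases k with
        | zero =>
          simp only [ballotCount, Nat.choose_succ_succ, Nat.cast_add, Nat.choose_zero_right]
          push_cast
          ring
        | succ k =>
          simp only [ballotCount, Nat.choose_succ_succ, Nat.cast_add]
          ring

lemma narayana_identity (m k : ℕ) :
    ((m + 1 : ℕ) : ℤ) * ballotCount m (m + 1) k = (m + 1).choose k * (m + 1).choose (k + 1) := by
  cases k with
  | zero => simp [ballotCount]
  | succ k =>
    have h1 : ((m + 1 : ℕ) : ℤ) * m.choose k = (m + 1).choose (k + 1) * (k + 1 : ℕ) := by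
      exact_mod_cast Nat.add_one_mul_choose_eq m k
    have h2 : ((m + 1).choose (k + 2) : ℤ) * (k + 2 : ℕ) =
        (m + 1).choose (k + 1) * ((m + 1 : ℕ) - (k + 1 : ℕ)) := by
      rcases le_or_gt (k + 1) (m + 1) with h | h
      · have := Nat.choose_succ_right_eq (m + 1) (k + 1)
        zify [h] at this
        exact_mod_cast this
      · rw [Nat.choose_eq_zero_of_lt h, Nat.choose_eq_zero_of_lt (by omega)]
        simp
    have h3 : ((m + 1 + 1).choose (k + 2) : ℤ) =
        (m + 1).choose (k + 1) + (m + 1).choose (k + 2) := by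
      exact_mod_cast Nat.choose_succ_succ (m + 1) (k + 1)
    simp only [ballotCount]
    rw [h3]
    push_cast at h1 h2 ⊢
    linear_combination (-((m + 1).choose (k + 1) : ℤ) - (m + 1).choose (k + 2)) * h1 -
      ((m + 1).choose (k + 1) : ℤ) * h2

/-! ### Words as functions and as lists -/

/-- The list of letters of `w`, last letter first. -/
def toWord {m : ℕ} (w : Fin m → Bool) : List Bool := (List.ofFn w).reverse

lemma toWord_succ {m : ℕ} (w : Fin (m + 1) → Bool) :
    toWord w = ltr w (m + 1) :: toWord (fun i : Fin m => w i.castSucc) := by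
  rw [toWord, List.ofFn_succ', List.concat_eq_append, List.reverse_append]
  simp [toWord, ltr, Fin.last]

lemma ltr_castSucc {m : ℕ} (w : Fin (m + 1) → Bool) {i : ℕ} (hi : i ≤ m) :
    ltr (fun j : Fin m => w j.castSucc) i = ltr w i := by
  unfold ltr
  by_cases h : 1 ≤ i
  · rw [dif_pos ⟨h, hi⟩, dif_pos ⟨h, by omega⟩]
    rfl
  · rw [dif_neg (by omega), dif_neg (by omega)]

lemma pcnt_castSucc {m : ℕ} (w : Fin (m + 1) → Bool) (b : Bool) {i : ℕ} (hi : i ≤ m) :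
    pcnt (fun j : Fin m => w j.castSucc) b i = pcnt w b i := by
  unfold pcnt
  congr 1
  refine Finset.filter_congr fun j hj => ?_
  rw [ltr_castSucc w (by rw [Finset.mem_Icc] at hj; omega)]

lemma pcnt_succ {m : ℕ} (w : Fin m → Bool) (b : Bool) (i : ℕ) :
    pcnt w b (i + 1) = pcnt w b i + if ltr w (i + 1) = b then 1 else 0 := by
  unfold pcnt
  rw [← Finset.insert_Icc_right_eq_Icc_add_one (by omega), Finset.filter_insert]
  split_ifs
  · rw [Finset.card_insert_of_notMem (by simp)]
  · rfl

lemma count_toWord {m : ℕ} (w : Fin m → Bool) (b : Bool) :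
    (toWord w).count b = pcnt w b m := by
  induction m with
  | zero => simp [toWord, pcnt]
  | succ m ih =>
    rw [toWord_succ, List.count_cons, ih, pcnt_castSucc w b le_rfl, pcnt_succ]
    simp

lemma Bal_toWord {m : ℕ} (w : Fin m → Bool) :
    Bal (toWord w) ↔ ∀ i ≤ m, pcnt w false i ≤ pcnt w true i := by
  induction m with
  | zero => simp [toWord, Bal, pcnt]
  | succ m ih =>
    rw [toWord_succ, Bal, ← toWord_succ, count_toWord, count_toWord, ih]
    constructor
    · rintro ⟨h1, h2⟩ i hi
      rcases Nat.lt_or_ge m i with h | h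
      · obtain rfl : i = m + 1 := by omega
        exact h1
      · have := h2 i h
        rwa [pcnt_castSucc w _ h, pcnt_castSucc w _ h] at this
    · refine fun h => ⟨h _ le_rfl, fun i hi => ?_⟩
      rw [pcnt_castSucc w _ hi, pcnt_castSucc w _ hi]
      exact h i (by omega)

lemma dbl_toWord {m : ℕ} (w : Fin m → Bool) (b : Bool) :
    dbl b (toWord w) = true ↔ 2 ≤ m ∧ ltr w (m - 1) = b ∧ ltr w m = b := by
  rcases m with _ | _ | m
  · simp [toWord, dbl]
  · rw [toWord_succ]
    simp [toWord, dbl]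
  · rw [toWord_succ, toWord_succ, ltr_castSucc w le_rfl]
    simp [dbl, and_comm]

lemma lnfs_toWord {m : ℕ} (w : Fin m → Bool) :
    lnfs (toWord w) = ((Finset.Icc 2 (m - 1)).filter fun i =>
      ltr w (i - 1) = ltr w i ∧ ltr w i ≠ ltr w (i + 1)).card := by
  induction m with
  | zero => simp [toWord, lnfs]
  | succ m ih =>
    have hcongr : ((Finset.Icc 2 (m - 1)).filter fun i =>
        ltr (fun j : Fin m => w j.castSucc) (i - 1) = ltr (fun j : Fin m => w j.castSucc) i ∧
        ltr (fun j : Fin m => w j.castSucc) i ≠ ltr (fun j : Fin m => w j.castSucc) (i + 1)) =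
        (Finset.Icc 2 (m - 1)).filter fun i =>
          ltr w (i - 1) = ltr w i ∧ ltr w i ≠ ltr w (i + 1) := by
      refine Finset.filter_congr fun i hi => ?_
      rw [Finset.mem_Icc] at hi
      rw [ltr_castSucc w (by omega), ltr_castSucc w (by omega), ltr_castSucc w (by omega)]
    rw [toWord_succ, lnfs, ih, hcongr]
    simp only [dbl_toWord, Nat.add_sub_cancel]
    rw [ltr_castSucc w (by omega), ltr_castSucc w le_rfl]
    by_cases hm : 2 ≤ m
    · obtain ⟨m, rfl⟩ : ∃ m', m = m' + 1 := ⟨m - 1, by omega⟩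
      rw [Nat.add_sub_cancel, ← Finset.insert_Icc_right_eq_Icc_add_one (by omega),
        Finset.filter_insert]
      have hiff : (2 ≤ m + 1 ∧ ltr w m = (!ltr w (m + 1 + 1)) ∧
          ltr w (m + 1) = (!ltr w (m + 1 + 1))) ↔
          (ltr w (m + 1 - 1) = ltr w (m + 1) ∧ ltr w (m + 1) ≠ ltr w (m + 1 + 1)) := by
        rw [Nat.add_sub_cancel]
        generalize ltr w m = x
        generalize ltr w (m + 1) = y
        generalize ltr w (m + 1 + 1) = z
        revert x y z
        simp [hm]
      simp only [hiff]
      split_ifs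
      · rw [Finset.card_insert_of_notMem (by simp)]
      · rfl
    · rw [Finset.Icc_eq_empty (by omega), Finset.Icc_eq_empty (by omega)]
      simp [hm]

lemma toWord_injective {m : ℕ} : Function.Injective (toWord (m := m)) := fun _ _ h =>
  List.ofFn_injective (List.reverse_injective h)

lemma exists_toWord {m : ℕ} {l : List Bool} (h : l.length = m) :
    ∃ w : Fin m → Bool, toWord w = l := by
  subst h
  refine ⟨fun i => l.reverse.get (i.cast (by simp)), ?_⟩
  rw [toWord, List.reverse_eq_iff]
  apply List.ext_get <;> simp

lemma card_eq_coeff_Phi (n k : ℕ) :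
    (Nat.card {w : Fin (2 * n) → Bool // IsDyck n w ∧ (LSset w).card = k} : ℤ) =
      (Phi n n).coeff k := by
  have hcoeff : (Phi n n).coeff k = (((ballotWords n n).filter fun l => lnfs l = k).card : ℤ) := by
    simp [Phi, finsetSum_coeff, coeff_X_pow, eq_comm (a := k)]
  have hiff (w : Fin (2 * n) → Bool) : (IsDyck n w ∧ (LSset w).card = k) ↔
      toWord w ∈ (ballotWords n n).filter fun l => lnfs l = k := by
    have hlen := List.count_true_add_count_false (toWord w)
    have hlen' : (toWord w).length = 2 * n := by simp [toWord]
    rw [Finset.mem_filter, mem_ballotWords, Bal_toWord, lnfs_toWord, IsDyck, LSset,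
      ← count_toWord]
    constructor
    · rintro ⟨⟨h1, h2⟩, h3⟩
      exact ⟨⟨h2, h1, by omega⟩, h3⟩
    · rintro ⟨⟨h2, h1, _⟩, h3⟩
      exact ⟨⟨h1, h2⟩, h3⟩
  rw [hcoeff, Nat.cast_inj, ← Nat.card_eq_finsetCard]
  refine Nat.card_eq_of_bijective
    (fun w => (⟨toWord w.1, (hiff w.1).1 w.2⟩ :
      {l // l ∈ (ballotWords n n).filter fun l => lnfs l = k})) ⟨?_, ?_⟩
  · intro w w' h
    exact Subtype.ext (toWord_injective (congrArg Subtype.val h))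
  · rintro ⟨l, hl⟩
    obtain ⟨_, h1, h2⟩ := mem_ballotWords.1 (Finset.mem_filter.1 hl).1
    have hlen := List.count_true_add_count_false l
    obtain ⟨w, rfl⟩ := exists_toWord (m := 2 * n) (l := l) (by omega)
    exact ⟨⟨w, (hiff w).2 hl⟩, rfl⟩

/-- The number of Dyck paths of length `2n` with exactly `k` long non-final
sequences equals the Narayana number `N(n,k) = (1/n) C(n,k) C(n,k+1)` (stated
multiplied through by `n`). -/
theorem narayana_count_lnfs (n k : ℕ) (hn : 0 < n) :
    n * Nat.card {w : Fin (2 * n) → Bool // IsDyck n w ∧ (LSset w).card = k} =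
      n.choose k * n.choose (k + 1) := by
  obtain ⟨m, rfl⟩ : ∃ m, n = m + 1 := ⟨n - 1, by omega⟩
  have h := narayana_identity m k
  rw [← coeff_Phi m (m + 1) k le_rfl, ← card_eq_coeff_Phi] at h
  exact_mod_cast h
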